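/- Let p ≥ 10^{20} be a prime, let χ be a non-principal Dirichlet character modulo p, and let u be a prime with u ≥ e²·log p. Then there exists a positive integer n with gcd(n,u) = 1, χ(n) ≠ 1, and n < 6.1374·p^{1/4}·log p. -/

import Mathlib

/-!
Suppose `χ n = 1` for every `n < X` not divisible by `u`. For a reduced fraction `r / q` with
`r ≤ X / 2` and `q ≤ X / (2 * h)`, multiplicativity gives `χ (r / q + m) = χ (r + m * q) = 1` for
all `m < h`, as long as `u` divides neither `q` nor any `r + m * q`. Distinct reduced fractions stay
distinct modulo `p`, so `χ` has at least a constant times `X ^ 2 / h` runs of length `h`.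

In the other direction, a nontrivial `χ` has a prime `l ∣ p - 1` such that `χ x = 1` forces
`x ^ k = 1`, where `k = (p - 1) / l`. A polynomial in the style of Stepanov, vanishing to high order
at the start of each run, shows that there are at most `5 * h * √p` runs of length `h` once
`√p ≤ l ^ h`. The two bounds conflict for some `h ≤ 0.75 * log p`.

The Stepanov polynomial is `∑ P_e (X, X ^ q) * ∏ (X + b_m) ^ (k * e_m)`, with `0 ≤ e_m < l`. To see
that it is not zero, replace `X ^ q` by an independent variable `y`: then `(X + b_m) ^ k` becomes an
`l`-th root `z_m` of `(y + b_m) / (X + b_m)`. The `z_m` generate a Kummer extension of `F(X, y)` in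
which the monomials `z ^ e` are linearly independent, so multiplication by `∑ P_e z ^ e` has a
nonzero determinant. Its degree in `X` is less than `q`, and substituting `y = X ^ q` is injective
on such polynomials.
-/

section

open Finset Polynomial

section KummerMatrix

variable {ι R S : Type*} [Fintype ι] [CommRing R] [CommRing S] {l : ℕ}

/-- The monomial `∏ z_m ^ e_m` with exponents reduced modulo `l`. When the `l`-th powers of the
`z m` lie in a base ring, these monomials span the Kummer extension generated by the `z m`. -/
def kummerMonomial (z : ι → R) (e : ι → Fin l) : R := ∏ m, z m ^ (e m : ℕ)

theorem map_kummerMonomial (φ : R →+* S) (z : ι → R) (e : ι → Fin l) :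
    φ (kummerMonomial z e) = kummerMonomial (φ ∘ z) e := by
  simp only [kummerMonomial, map_prod, map_pow, Function.comp_apply]

theorem kummerMonomial_ne_zero [IsDomain R] {z : ι → R} (hz : ∀ m, z m ≠ 0) (e : ι → Fin l) :
    kummerMonomial z e ≠ 0 :=
  prod_ne_zero_iff.2 fun m _ => pow_ne_zero _ (hz m)

theorem kummerMonomial_pow_mul {x y z : ι → R} (hz : ∀ m, z m ^ l * x m = y m)
    (e : ι → Fin l) : kummerMonomial z e ^ l * kummerMonomial x e = kummerMonomial y e := by
  simp only [kummerMonomial, ← prod_pow, ← prod_mul_distrib]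
  exact prod_congr rfl fun m _ => by rw [← hz m, mul_pow, ← pow_mul, ← pow_mul, mul_comm l]

theorem mul_pow_val_mul_pow_val {x y z : R} (hz : z ^ l * x = y) (d e : Fin l) :
    x * (z ^ (d : ℕ) * z ^ (e : ℕ)) = (if d + e < d then y else x) * z ^ ((d + e : Fin l) : ℕ) := by
  simp only [Fin.lt_def, Fin.val_add]
  obtain hlt | hle := lt_or_ge ((d : ℕ) + e) l
  · rw [Nat.mod_eq_of_lt hlt, if_neg (by omega), pow_add]
  · have hmod : ((d : ℕ) + e) % l = d + e - l := by
      rw [Nat.mod_eq_sub_mod hle, Nat.mod_eq_of_lt (by omega)]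
    rw [hmod, if_pos (by omega), ← hz, ← pow_add, ← Nat.add_sub_cancel' hle, pow_add,
      Nat.add_sub_cancel_left]
    ring

theorem prod_mul_kummerMonomial_mul_kummerMonomial {x y z : ι → R}
    (hz : ∀ m, z m ^ l * x m = y m) (d e : ι → Fin l) :
    (∏ m, x m) * (kummerMonomial z d * kummerMonomial z e) =
      (∏ m, if (d + e) m < d m then y m else x m) * kummerMonomial z (d + e) := by
  simp only [kummerMonomial, ← prod_mul_distrib]
  exact prod_congr rfl fun m _ => mul_pow_val_mul_pow_val (hz m) (d m) (e m)

/-- The matrix of multiplication by `∏ x_m * ∑ P_e z ^ e` on the span of the monomials `z ^ e`,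
where `z_m ^ l = y_m / x_m`. The exponents add in `Fin l`, and the factor `∏ x_m` clears the
denominators created when an exponent wraps around. -/
def kummerMatrix (x y : ι → R) (P : (ι → Fin l) → R) : Matrix (ι → Fin l) (ι → Fin l) R :=
  Matrix.of fun d e => P (e - d) * ∏ m, if e m < d m then y m else x m

theorem map_kummerMatrix (φ : R →+* S) (x y : ι → R) (P : (ι → Fin l) → R) :
    (kummerMatrix x y P).map φ = kummerMatrix (φ ∘ x) (φ ∘ y) (φ ∘ P) := by
  ext d e
  simp only [kummerMatrix, Matrix.map_apply, Matrix.of_apply, map_mul,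
    map_prod, apply_ite φ, Function.comp_apply]

variable [NeZero l] [DecidableEq ι]

theorem kummerMatrix_mulVec {x y z : ι → R} (hz : ∀ m, z m ^ l * x m = y m)
    (P : (ι → Fin l) → R) :
    (kummerMatrix x y P).mulVec (kummerMonomial z) =
      ((∏ m, x m) * ∑ e, P e * kummerMonomial z e) • kummerMonomial z := by
  ext d
  calc (kummerMatrix x y P).mulVec (kummerMonomial z) d
      = ∑ e, P e * ((∏ m, if (d + e) m < d m then y m else x m) * kummerMonomial z (d + e)) := by
        rw [Matrix.mulVec, dotProduct, ← Equiv.sum_comp (Equiv.addLeft d)]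
        simp only [kummerMatrix, Matrix.of_apply, Equiv.coe_addLeft, add_sub_cancel_left, mul_assoc]
    _ = ∑ e, P e * ((∏ m, x m) * (kummerMonomial z d * kummerMonomial z e)) := by
        simp only [prod_mul_kummerMonomial_mul_kummerMonomial hz]
    _ = (((∏ m, x m) * ∑ e, P e * kummerMonomial z e) • kummerMonomial z) d := by
        rw [Pi.smul_apply, smul_eq_mul, mul_sum, sum_mul]
        exact sum_congr rfl fun e _ => by ring

theorem det_kummerMatrix_eq_zero [IsDomain R] {x y z : ι → R} (hz : ∀ m, z m ^ l * x m = y m)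
    (hz0 : ∀ m, z m ≠ 0) {P : (ι → Fin l) → R} (hP : ∑ e, P e * kummerMonomial z e = 0) :
    (kummerMatrix x y P).det = 0 := by
  refine Matrix.exists_mulVec_eq_zero_iff.1 ⟨kummerMonomial z, fun h => ?_, ?_⟩
  · exact kummerMonomial_ne_zero hz0 0 (congrFun h 0)
  · rw [kummerMatrix_mulVec hz, hP, mul_zero, zero_smul]

theorem eq_zero_of_det_kummerMatrix_eq_zero [IsDomain R] [IsDomain S] [Algebra R S]
    {x y : ι → R} {z : ι → S} (hz : ∀ m, z m ^ l * algebraMap R S (x m) = algebraMap R S (y m))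
    (hx : ∀ m, algebraMap R S (x m) ≠ 0)
    (hlin : LinearIndependent R (kummerMonomial z : (ι → Fin l) → S))
    {P : (ι → Fin l) → R} (hdet : (kummerMatrix x y P).det = 0) : P = 0 := by
  obtain ⟨c, hc0, hc⟩ := Matrix.exists_vecMul_eq_zero_iff.2 hdet
  have eq_zero_of_sum {a : (ι → Fin l) → R}
      (ha : ∑ e, algebraMap R S (a e) * kummerMonomial z e = 0) : a = 0 := by
    funext e
    exact Fintype.linearIndependent_iff.1 hlin a (by simpa only [Algebra.smul_def] using ha) e
  have hprod : (algebraMap R S ∘ c) ⬝ᵥ (((∏ m, algebraMap R S (x m)) *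
      ∑ e, algebraMap R S (P e) * kummerMonomial z e) • kummerMonomial z) = 0 := by
    have hmulVec := kummerMatrix_mulVec (x := algebraMap R S ∘ x) (y := algebraMap R S ∘ y)
      (z := z) hz (algebraMap R S ∘ P)
    simp only [Function.comp_apply] at hmulVec
    have hvecMul : Matrix.vecMul (algebraMap R S ∘ c)
        ((kummerMatrix x y P).map (algebraMap R S)) = 0 := by
      funext e
      rw [← RingHom.map_vecMul, hc, Pi.zero_apply, Pi.zero_apply, map_zero]
    rw [← hmulVec, Matrix.dotProduct_mulVec, ← map_kummerMatrix, hvecMul, zero_dotProduct]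
  rw [dotProduct_smul, smul_eq_mul, mul_eq_zero, mul_eq_zero] at hprod
  obtain (h | h) | h := hprod
  · exact absurd h (prod_ne_zero_iff.2 fun m _ => hx m)
  · exact eq_zero_of_sum h
  · exact absurd (eq_zero_of_sum h) hc0

end KummerMatrix

section KummerIndependence

theorem linearIndependent_of_pow_mem_bot {K L I : Type*} [Field K] [Field L] [Algebra K L]
    [IsGalois K L] {n : ℕ} [NeZero n] {ζ : K} (hζ : IsPrimitiveRoot ζ n) {v : I → L}
    (hv0 : ∀ i, v i ≠ 0) (hv : ∀ i, v i ^ n ∈ Set.range (algebraMap K L))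
    (hdiv : ∀ i j, v i / v j ∈ Set.range (algebraMap K L) → i = j) :
    LinearIndependent K v := by
  have hζL : IsPrimitiveRoot (algebraMap K L ζ) n :=
    hζ.map_of_injective (algebraMap K L).injective
  have hσ0 (σ : Gal(L/K)) (i : I) : σ (v i) ≠ 0 := by simpa using hv0 i
  have fixed_ratio (σ τ : Gal(L/K)) (i : I) : σ (τ (v i) / v i) = τ (v i) / v i := by
    obtain ⟨a, ha⟩ := hv i
    have hroot : (τ (v i) / v i) ^ n = 1 := by
      rw [div_pow, ← map_pow, ← ha, AlgEquiv.commutes, ha, div_self (pow_ne_zero _ (hv0 i))]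
    obtain ⟨j, -, hj⟩ := hζL.eq_pow_of_pow_eq_one hroot
    rw [← hj, ← map_pow, AlgEquiv.commutes]
  let cocycle (i : I) : Gal(L/K) →* L :=
    { toFun σ := σ (v i) / v i
      map_one' := div_self (hv0 i)
      map_mul' σ τ := by
        have h := fixed_ratio σ τ i
        rw [map_div₀, div_eq_iff (hσ0 σ i)] at h
        rw [AlgEquiv.mul_apply, h]
        ring }
  have cocycle_injective : Function.Injective cocycle := by
    intro i j hij
    refine hdiv i j ((InfiniteGalois.mem_range_algebraMap_iff_fixed _).2 fun σ => ?_)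
    have h : σ (v i) / v i = σ (v j) / v j := DFunLike.congr_fun hij σ
    rw [map_div₀, div_eq_div_iff (hσ0 σ j) (hv0 j)]
    rw [div_eq_div_iff (hv0 i) (hv0 j)] at h
    linear_combination h
  have dedekind := (linearIndependent_monoidHom Gal(L/K) L).comp cocycle cocycle_injective
  refine linearIndependent_iff'.2 fun s c hc i hi => ?_
  have hsum : ∑ j ∈ s, (c j • v j) • (cocycle j : Gal(L/K) → L) = 0 := by
    funext σ
    have hσ : σ (∑ j ∈ s, c j • v j) = 0 := by rw [hc, map_zero]
    rw [map_sum] at hσ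
    rw [Finset.sum_apply, Pi.zero_apply, ← hσ]
    refine sum_congr rfl fun j _ => ?_
    change c j • v j * (σ (v j) / v j) = σ (c j • v j)
    rw [map_smul, smul_mul_assoc, mul_div_cancel₀ _ (hv0 j)]
  have hci := linearIndependent_iff'.1 dedekind s _ hsum i hi
  exact (smul_eq_zero.1 hci).resolve_right (hv0 i)

section Prime

variable {ι R : Type*} [Fintype ι] [CommRing R] {l : ℕ}

theorem emultiplicity_kummerMonomial_eq_zero {a : R} (ha : Prime a) {x : ι → R}
    (hx : ∀ n, ¬ a ∣ x n) (e : ι → Fin l) : emultiplicity a (kummerMonomial x e) = 0 := by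
  refine emultiplicity_eq_zero.2 fun h => ?_
  obtain ⟨n, -, hn⟩ := ha.exists_mem_finset_dvd h
  exact hx n (ha.dvd_of_dvd_pow hn)

variable [IsDomain R] [WfDvdMonoid R]

theorem emultiplicity_kummerMonomial_self {y : ι → R} {m : ι} (hm : Prime (y m))
    (hy : ∀ n, n ≠ m → ¬ y m ∣ y n) (e : ι → Fin l) :
    emultiplicity (y m) (kummerMonomial y e) = (e m : ℕ) := by
  classical
  rw [kummerMonomial, Finset.emultiplicity_prod hm, Finset.sum_eq_single m]
  · rw [emultiplicity_pow hm,
      (FiniteMultiplicity.of_prime_left hm hm.ne_zero).emultiplicity_self, mul_one]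
  · intro n _ hnm
    rw [emultiplicity_pow hm, emultiplicity_eq_zero.2 (hy n hnm), mul_zero]
  · exact fun h => absurd (mem_univ m) h

theorem eq_of_pow_mul_kummerMonomial_eq {x y : ι → R} (hy : ∀ m, Prime (y m))
    (hyx : ∀ m n, ¬ y m ∣ x n) (hyy : ∀ m n, n ≠ m → ¬ y m ∣ y n) {s t : R} (hs : s ≠ 0)
    (ht : t ≠ 0) {e e' : ι → Fin l}
    (h : t ^ l * (kummerMonomial y e * kummerMonomial x e') =
      s ^ l * (kummerMonomial y e' * kummerMonomial x e)) : e = e' := by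
  funext m
  have hm := hy m
  have emultiplicity_side {r : R} (hr : r ≠ 0) (d d' : ι → Fin l) :
      emultiplicity (y m) (r ^ l * (kummerMonomial y d * kummerMonomial x d')) =
        (l * multiplicity (y m) r + d m : ℕ) := by
    rw [emultiplicity_mul hm, emultiplicity_mul hm, emultiplicity_pow hm,
      (FiniteMultiplicity.of_prime_left hm hr).emultiplicity_eq_multiplicity,
      emultiplicity_kummerMonomial_self hm (hyy m), emultiplicity_kummerMonomial_eq_zero hm (hyx m)]
    push_cast
    rw [add_zero]
  have heq := congrArg (emultiplicity (y m)) h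
  rw [emultiplicity_side ht, emultiplicity_side hs, Nat.cast_inj] at heq
  have hmod := congrArg (· % l) heq
  simp only [Nat.mul_add_mod, Nat.mod_eq_of_lt (e m).isLt, Nat.mod_eq_of_lt (e' m).isLt] at hmod
  exact Fin.ext hmod

theorem linearIndependent_kummerMonomial {K L : Type*} [Field K] [Field L] [Algebra R K]
    [IsFractionRing R K] [Algebra K L] [IsGalois K L] [Algebra R L] [IsScalarTower R K L]
    [NeZero l] {ζ : K} (hζ : IsPrimitiveRoot ζ l) {x y : ι → R}
    (hx : ∀ m, x m ≠ 0) (hy : ∀ m, Prime (y m)) (hyx : ∀ m n, ¬ y m ∣ x n)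
    (hyy : ∀ m n, n ≠ m → ¬ y m ∣ y n) {z : ι → L} (hz0 : ∀ m, z m ≠ 0)
    (hz : ∀ m, z m ^ l * algebraMap R L (x m) = algebraMap R L (y m)) :
    LinearIndependent R (kummerMonomial z : (ι → Fin l) → L) := by
  have hinj : Function.Injective (algebraMap R L) := by
    rw [IsScalarTower.algebraMap_eq R K L]
    exact (algebraMap K L).injective.comp (IsFractionRing.injective R K)
  have hpow (e : ι → Fin l) : kummerMonomial z e ^ l * algebraMap R L (kummerMonomial x e) =
      algebraMap R L (kummerMonomial y e) := by
    rw [map_kummerMonomial, map_kummerMonomial]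
    exact kummerMonomial_pow_mul hz e
  have hxmap (e : ι → Fin l) : algebraMap R L (kummerMonomial x e) ≠ 0 :=
    (map_ne_zero_iff _ hinj).2 (kummerMonomial_ne_zero hx e)
  refine (LinearIndependent.iff_fractionRing R K).2 <|
    linearIndependent_of_pow_mem_bot hζ (kummerMonomial_ne_zero hz0) (fun e => ?_) fun e e' h => ?_
  · refine ⟨algebraMap R K (kummerMonomial y e) / algebraMap R K (kummerMonomial x e), ?_⟩
    rw [map_div₀, ← IsScalarTower.algebraMap_apply, ← IsScalarTower.algebraMap_apply, ← hpow,
      mul_div_cancel_right₀ _ (hxmap e)]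
  · obtain ⟨c, hc⟩ := h
    obtain ⟨s, t, ht, rfl⟩ := IsFractionRing.div_surjective (A := R) c
    have ht0 : algebraMap R L t ≠ 0 := (map_ne_zero_iff _ hinj).2 (nonZeroDivisors.ne_zero ht)
    have hratio : algebraMap R L t * kummerMonomial z e =
        algebraMap R L s * kummerMonomial z e' := by
      rw [map_div₀, ← IsScalarTower.algebraMap_apply, ← IsScalarTower.algebraMap_apply,
        div_eq_div_iff ht0 (kummerMonomial_ne_zero hz0 e')] at hc
      rw [hc, mul_comm]
    have hs : s ≠ 0 := by
      rintro rfl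
      rw [map_zero, zero_mul] at hratio
      exact mul_ne_zero ht0 (kummerMonomial_ne_zero hz0 e) hratio
    refine eq_of_pow_mul_kummerMonomial_eq hy hyx hyy hs (nonZeroDivisors.ne_zero ht) (hinj ?_)
    simp only [map_mul, map_pow, ← hpow]
    linear_combination algebraMap R L (kummerMonomial x e) * algebraMap R L (kummerMonomial x e') *
      congrArg (· ^ l) hratio

theorem det_kummerMatrix_ne_zero [NeZero l] [DecidableEq ι] {ζ : R}
    (hζ : IsPrimitiveRoot ζ l) (hl : (l : R) ≠ 0) {x y : ι → R} (hx : ∀ m, x m ≠ 0)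
    (hy : ∀ m, Prime (y m)) (hyx : ∀ m n, ¬ y m ∣ x n) (hyy : ∀ m n, n ≠ m → ¬ y m ∣ y n)
    {P : (ι → Fin l) → R} (hP : P ≠ 0) : (kummerMatrix x y P).det ≠ 0 := by
  let K := FractionRing R
  let L := SeparableClosure K
  have hinj : Function.Injective (algebraMap R L) := by
    rw [IsScalarTower.algebraMap_eq R K L]
    exact (algebraMap K L).injective.comp (IsFractionRing.injective R K)
  have : NeZero (l : L) := by
    refine ⟨?_⟩
    rw [← map_natCast (algebraMap R L)]
    exact (map_ne_zero_iff _ hinj).2 hl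
  have hxL (m : ι) : algebraMap R L (x m) ≠ 0 := (map_ne_zero_iff _ hinj).2 (hx m)
  have hyL (m : ι) : algebraMap R L (y m) ≠ 0 := (map_ne_zero_iff _ hinj).2 (hy m).ne_zero
  choose z hz using fun m =>
    IsSepClosed.exists_pow_nat_eq (algebraMap R L (y m) / algebraMap R L (x m)) l
  have hz0 (m : ι) : z m ≠ 0 := by
    refine ne_zero_pow (NeZero.ne l) ?_
    rw [hz]
    exact div_ne_zero (hyL m) (hxL m)
  have hzx (m : ι) : z m ^ l * algebraMap R L (x m) = algebraMap R L (y m) := by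
    rw [hz, div_mul_cancel₀ _ (hxL m)]
  have hζK : IsPrimitiveRoot (algebraMap R K ζ) l :=
    hζ.map_of_injective (IsFractionRing.injective R K)
  exact fun hdet => hP <| eq_zero_of_det_kummerMatrix_eq_zero hzx hxL
    (linearIndependent_kummerMonomial hζK hx hy hyx hyy hz0 hzx) hdet

end Prime

end KummerIndependence

section Substitution

variable {R : Type*} [CommRing R]

/-- The substitution `x ↦ X`, `y ↦ X ^ n` on polynomials in `x` and `y`, where `x` is the outer
and `y` the inner variable of `R[X][X]`. -/
noncomputable def substPow (R : Type*) [CommRing R] (n : ℕ) : R[X][X] →+* R[X] :=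
  eval₂RingHom (expand R n : R[X] →ₐ[R] R[X]).toRingHom X

@[simp]
theorem substPow_C (n : ℕ) (f : R[X]) : substPow R n (C f) = expand R n f :=
  eval₂_C _ _

@[simp]
theorem substPow_X (n : ℕ) : substPow R n X = X :=
  eval₂_X _ _

theorem substPow_map_C (n : ℕ) (f : R[X]) : substPow R n (f.map C) = f := by
  have hC : (expand R n : R[X] →ₐ[R] R[X]).toRingHom.comp C = C :=
    RingHom.ext fun _ => expand_C _ _
  rw [substPow, coe_eval₂RingHom, eval₂_map, hC, eval₂_C_X]

theorem coeff_substPow {n : ℕ} {Q : R[X][X]} (hQ : Q.natDegree < n) {j : ℕ} (hj : j < n)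
    (i : ℕ) : (substPow R n Q).coeff (n * i + j) = (Q.coeff j).coeff i := by
  have hn : 0 < n := by omega
  rw [substPow, coe_eval₂RingHom, eval₂_eq_sum_range' _ hQ, finsetSum_coeff,
    Finset.sum_eq_single_of_mem j (mem_range.2 hj), coeff_mul_X_pow]
  · exact coeff_expand_mul' hn _ i
  · intro m hm hmj
    rw [coeff_mul_X_pow']
    refine ite_eq_right_iff.2 fun hle => ?_
    change (expand R n (Q.coeff m)).coeff _ = 0
    rw [coeff_expand hn, if_neg]
    intro hdvd
    have hmod : m ≡ n * i + j [MOD n] := (Nat.modEq_iff_dvd' hle).2 hdvd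
    exact hmj ((hmod.trans (by simp [Nat.ModEq])).eq_of_lt_of_lt (mem_range.1 hm) hj)

theorem eq_zero_of_substPow_eq_zero {n : ℕ} {Q : R[X][X]} (hQ : Q.natDegree < n)
    (h : substPow R n Q = 0) : Q = 0 := by
  ext j i
  obtain hj | hj := lt_or_ge j n
  · rw [← coeff_substPow hQ hj, h, coeff_zero, coeff_zero, coeff_zero]
  · rw [coeff_eq_zero_of_natDegree_lt (hQ.trans_le hj), coeff_zero, coeff_zero,
      coeff_zero]

theorem natDegree_det_le {n : Type*} [Fintype n] [DecidableEq n] {M : Matrix n n R[X]} {d : ℕ}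
    (hM : ∀ i j, (M i j).natDegree ≤ d) : M.det.natDegree ≤ Fintype.card n * d := by
  rw [Matrix.det_apply]
  refine natDegree_sum_le_of_forall_le _ _ fun σ _ => (natDegree_smul_le _ _).trans ?_
  exact (natDegree_prod_le _ _).trans (sum_le_card_nsmul _ _ _ fun i _ => hM _ _)

variable {ι : Type*} [Fintype ι] {l : ℕ}

theorem natDegree_kummerMatrix_le {x y : ι → R[X]} (hx : ∀ m, (x m).natDegree ≤ 1)
    (hy : ∀ m, (y m).natDegree ≤ 1) {P : (ι → Fin l) → R[X]} {B : ℕ}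
    (hP : ∀ e, (P e).natDegree ≤ B) (d e : ι → Fin l) :
    (kummerMatrix x y P d e).natDegree ≤ B + Fintype.card ι := by
  refine natDegree_mul_le_of_le (hP _) ((natDegree_prod_le _ _).trans ?_)
  refine (sum_le_card_nsmul _ _ 1 fun m _ => ?_).trans_eq (by simp)
  split_ifs
  exacts [hy m, hx m]

theorem det_kummerMatrix_X_add_C_ne_zero {F ι : Type*} [Field F] [Fintype ι] [DecidableEq ι]
    {l : ℕ} [NeZero l] {ζ : F} (hζ : IsPrimitiveRoot ζ l) (hl : (l : F) ≠ 0) {b : ι → F}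
    (hb : Function.Injective b) {P : (ι → Fin l) → F[X][X]} (hP : P ≠ 0) :
    (kummerMatrix (fun m => X + C (C (b m))) (fun m => C (X + C (b m))) P).det ≠ 0 := by
  have hCC : Function.Injective (C.comp C : F →+* F[X][X]) := C_injective.comp C_injective
  have hX (m : ι) : Prime (X + C (b m)) := by simpa using prime_X_sub_C (-b m)
  refine det_kummerMatrix_ne_zero (hζ.map_of_injective hCC) ?_ (fun m => X_add_C_ne_zero _)
    (fun m => prime_C_iff.2 (hX m)) (fun m n hdvd => ?_) (fun m n hnm hdvd => ?_) hP
  · rw [← map_natCast (C.comp C)]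
    exact (map_ne_zero_iff _ hCC).2 hl
  · refine (hX m).not_isUnit (isUnit_of_dvd_one ?_)
    simpa [coeff_X, coeff_C] using (C_dvd_iff_dvd_coeff _ _).1 hdvd 1
  · have hroot : X - C (-b m) ∣ X + C (b n) := by
      simpa using (C_dvd_iff_dvd_coeff _ _).1 hdvd 0
    rw [dvd_iff_isRoot, IsRoot, eval_add, eval_X, eval_C] at hroot
    exact hnm (hb (by linear_combination hroot))

end Substitution

section FiniteField

variable {F : Type*} [Field F] [Fintype F] {l k : ℕ}

theorem exists_isPrimitiveRoot_of_mul_eq_card_sub_one (hlk : l * k = Fintype.card F - 1) :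
    ∃ ζ : F, IsPrimitiveRoot ζ l := by
  classical
  obtain ⟨g, hg⟩ := IsCyclic.exists_generator (α := Fˣ)
  have hord : orderOf g = Fintype.card F - 1 := by
    rw [orderOf_eq_card_of_forall_mem_zpowers hg, Nat.card_eq_fintype_card, Fintype.card_units]
  have hgen : IsPrimitiveRoot g (Fintype.card F - 1) := hord ▸ IsPrimitiveRoot.orderOf g
  have hpos : 0 < Fintype.card F - 1 := Nat.sub_pos_of_lt Fintype.one_lt_card
  have hroot := hgen.pow hpos (by rw [← hlk, mul_comm] : Fintype.card F - 1 = k * l)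
  exact ⟨_, hroot.map_of_injective (f := Units.coeHom F) Units.val_injective⟩

theorem natCast_ne_zero_of_mul_eq_card_sub_one (hlk : l * k = Fintype.card F - 1) :
    (l : F) ≠ 0 := by
  intro h
  have hcast := congrArg (Nat.cast (R := F)) hlk
  rw [Nat.cast_mul, h, zero_mul, Nat.cast_sub Fintype.card_pos, Nat.cast_card_eq_zero] at hcast
  simp at hcast

variable {ι : Type*} [Fintype ι] [DecidableEq ι]

theorem eq_zero_of_sum_substPow_mul_kummerMonomial_eq_zero (hlk : l * k = Fintype.card F - 1)
    {b : ι → F} (hb : Function.Injective b) {B : ℕ}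
    (hB : l ^ Fintype.card ι * (B + Fintype.card ι) ≤ Fintype.card F)
    {P : (ι → Fin l) → F[X][X]} (hP : ∀ e, (P e).natDegree < B)
    (h : ∑ e, substPow F (Fintype.card F) (P e) *
      kummerMonomial (fun m => (X + C (b m)) ^ k) e = 0) : P = 0 := by
  have hl := natCast_ne_zero_of_mul_eq_card_sub_one hlk
  have : NeZero l := ⟨fun h0 => hl (by simp [h0])⟩
  obtain ⟨ζ, hζ⟩ := exists_isPrimitiveRoot_of_mul_eq_card_sub_one hlk
  by_contra hP0
  refine det_kummerMatrix_X_add_C_ne_zero hζ hl hb hP0 <|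
    eq_zero_of_substPow_eq_zero (n := Fintype.card F) ?_ ?_
  · have hBpos : 0 < B := pos_of_gt (hP 0)
    calc _ ≤ Fintype.card (ι → Fin l) * (B - 1 + Fintype.card ι) :=
          natDegree_det_le <| natDegree_kummerMatrix_le (fun _ => (natDegree_X_add_C _).le)
            (fun _ => (natDegree_C _).trans_le zero_le_one) fun e => Nat.le_sub_one_of_lt (hP e)
      _ < l ^ Fintype.card ι * (B + Fintype.card ι) := by
          rw [Fintype.card_fun, Fintype.card_fin]
          exact Nat.mul_lt_mul_of_pos_left (by omega) (pow_pos (Nat.pos_of_neZero l) _)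
      _ ≤ Fintype.card F := hB
  · rw [RingHom.map_det, RingHom.mapMatrix_apply, map_kummerMatrix]
    refine det_kummerMatrix_eq_zero (fun m => ?_) (fun m => ?_) h
    · have hx : substPow F (Fintype.card F) (X + C (C (b m))) = X + C (b m) := by simp
      have hy : substPow F (Fintype.card F) (C (X + C (b m))) =
          (X + C (b m)) ^ Fintype.card F := by rw [substPow_C, FiniteField.expand_card]
      rw [Function.comp_apply, Function.comp_apply, hx, hy, ← pow_mul, ← pow_succ, mul_comm k,
        hlk, Nat.sub_add_cancel Fintype.card_pos]
    · exact pow_ne_zero _ (X_add_C_ne_zero _)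

end FiniteField

section Stepanov

section TwistedDerivative

variable {R : Type*} [CommRing R]

theorem mul_derivative_pow (W : R[X]) (n : ℕ) :
    W * derivative (W ^ n) = n * derivative W * W ^ n := by
  cases n with
  | zero => simp
  | succ n =>
    rw [derivative_pow, C_eq_natCast, Nat.add_sub_cancel, pow_succ]
    ring

/-- The operators `T_s` with `W ^ s * (P * f)⁽ˢ⁾ = T_s P * f` whenever `W * f' = Q * f`. -/
noncomputable def twistedDerivative (W Q : R[X]) : ℕ → R[X] →ₗ[R] R[X]
  | 0 => LinearMap.id
  | s + 1 => LinearMap.mulLeft R W ∘ₗ derivative ∘ₗ twistedDerivative W Q s +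
      LinearMap.mulLeft R (Q - s * derivative W) ∘ₗ twistedDerivative W Q s

theorem twistedDerivative_zero (W Q P : R[X]) : twistedDerivative W Q 0 P = P := rfl

theorem twistedDerivative_succ (W Q P : R[X]) (s : ℕ) :
    twistedDerivative W Q (s + 1) P = W * derivative (twistedDerivative W Q s P) +
      (Q - s * derivative W) * twistedDerivative W Q s P := rfl

theorem natDegree_twistedDerivative_le {W Q : R[X]} {h : ℕ} (hW : W.natDegree ≤ h)
    (hQ : Q.natDegree ≤ h) (P : R[X]) (s : ℕ) :
    (twistedDerivative W Q s P).natDegree ≤ P.natDegree + s * h := by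
  induction s with
  | zero => simp [twistedDerivative_zero]
  | succ s ih =>
    rw [twistedDerivative_succ, add_mul, one_mul, ← add_assoc, add_comm _ h]
    have hW' : (derivative W).natDegree ≤ h := (natDegree_derivative_le W).trans (by omega)
    have hsW' : (s * derivative W).natDegree ≤ h :=
      (natDegree_mul_le_of_le (natDegree_natCast s).le hW').trans_eq (zero_add h)
    refine natDegree_add_le_of_degree_le (natDegree_mul_le_of_le hW ?_)
      (natDegree_mul_le_of_le (natDegree_sub_le_of_le hQ hsW' |>.trans_eq (max_self h)) ih)
    exact (natDegree_derivative_le _).trans ((Nat.sub_le _ _).trans ih)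

theorem pow_mul_iterate_derivative_mul {W Q f : R[X]} (hf : W * derivative f = Q * f)
    (P : R[X]) (s : ℕ) :
    W ^ s * derivative^[s] (P * f) = twistedDerivative W Q s P * f := by
  induction s with
  | zero => simp [twistedDerivative_zero]
  | succ s ih =>
    have hpow : W * derivative (W ^ s) = s * derivative W * W ^ s := mul_derivative_pow W s
    have ih' := congrArg derivative ih
    rw [derivative_mul, derivative_mul] at ih'
    rw [twistedDerivative_succ, Function.iterate_succ_apply']
    linear_combination W * ih' + twistedDerivative W Q s P * hf - derivative^[s] (P * f) * hpow -
      s * derivative W * ih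

theorem exists_prod_mul_derivative_prod_pow_eq {ι : Type*} (b : ι → R) (f : ι → ℕ)
    (s : Finset ι) : ∃ Q : R[X], Q.natDegree ≤ #s ∧
      (∏ m ∈ s, (X + C (b m))) * derivative (∏ m ∈ s, (X + C (b m)) ^ f m) =
        Q * ∏ m ∈ s, (X + C (b m)) ^ f m := by
  classical
  nontriviality R
  induction s using Finset.induction_on with
  | empty => exact ⟨0, by simp⟩
  | insert m s hm ih =>
    obtain ⟨Q, hQ, hQe⟩ := ih
    have hlog := mul_derivative_pow (X + C (b m)) (f m)
    rw [derivative_X_add_C, mul_one] at hlog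
    refine ⟨(f m : R[X]) * ∏ n ∈ s, (X + C (b n)) + (X + C (b m)) * Q, ?_, ?_⟩
    · rw [card_insert_of_notMem hm]
      refine natDegree_add_le_of_degree_le ?_ ?_
      · refine (natDegree_mul_le_of_le (natDegree_natCast _).le
          (natDegree_prod_le _ _)).trans ?_
        simp
      · exact (natDegree_mul_le_of_le (natDegree_X_add_C _).le hQ).trans_eq (add_comm _ _)
    · rw [prod_insert hm, prod_insert hm, derivative_mul]
      linear_combination (∏ n ∈ s, (X + C (b n))) * (∏ n ∈ s, (X + C (b n)) ^ f n) * hlog +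
        (X + C (b m)) * (X + C (b m)) ^ f m * hQe

end TwistedDerivative

theorem card_mul_le_natDegree {R : Type*} [CommRing R] [IsDomain R] {G : R[X]} {S : Finset R}
    {M : ℕ} (h : ∀ a ∈ S, M ≤ G.rootMultiplicity a) : #S * M ≤ G.natDegree := by
  classical
  have hle : M • S.val ≤ G.roots := Multiset.le_iff_count.2 fun a => by
    rw [Multiset.count_nsmul, count_roots]
    by_cases ha : a ∈ S
    · rw [Multiset.count_eq_one_of_mem S.nodup ha, mul_one]
      exact h a ha
    · rw [Multiset.count_eq_zero_of_notMem ha, mul_zero]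
      exact Nat.zero_le _
  calc #S * M = (M • S.val).card := by rw [Multiset.card_nsmul, mul_comm, Finset.card_def]
    _ ≤ G.roots.card := Multiset.card_le_card hle
    _ ≤ G.natDegree := card_roots' G

theorem le_rootMultiplicity_of_iterate_derivative {F : Type*} [Field F] {G : F[X]} (hG : G ≠ 0)
    {M : ℕ} (hM : ∀ m < M, m ≠ 0 → (m : F) ≠ 0) {a : F}
    (h : ∀ s < M, (derivative^[s] G).IsRoot a) : M ≤ G.rootMultiplicity a := by
  cases M with
  | zero => exact Nat.zero_le _
  | succ n =>
    exact lt_rootMultiplicity_of_isRoot_iterate_derivative_of_mem_nonZeroDivisors' hG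
      (fun m hm => h m (Nat.lt_succ_of_le hm))
      fun m hm hm0 => mem_nonZeroDivisors_of_ne_zero (hM m (Nat.lt_succ_of_le hm) hm0)

theorem exists_ne_zero_forall_map_eq_zero {F J : Type*} [Field F] [Fintype J] {B M N : ℕ}
    (Ψ : Fin M → (J → degreeLT F B) →ₗ[F] F[X]) (hΨ : ∀ s c, Ψ s c ∈ degreeLT F N)
    (hdim : M * N < Fintype.card J * B) : ∃ c, c ≠ 0 ∧ ∀ s, Ψ s c = 0 := by
  let Φ : (J → degreeLT F B) →ₗ[F] (Fin M → degreeLT F N) :=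
    LinearMap.pi fun s => (Ψ s).codRestrict _ (hΨ s)
  have finite (n : ℕ) : Module.Finite F (degreeLT F n) :=
    Module.Finite.equiv (degreeLTEquiv F n).symm
  have finrank (n : ℕ) : Module.finrank F (degreeLT F n) = n := by
    rw [(degreeLTEquiv F n).finrank_eq, Module.finrank_fin_fun]
  have hker : LinearMap.ker Φ ≠ ⊥ := LinearMap.ker_ne_bot_of_finrank_lt <| by
    simpa [Module.finrank_pi_fintype, finrank] using hdim
  obtain ⟨c, hc, hc0⟩ := (Submodule.ne_bot_iff _).1 hker
  exact ⟨c, hc0, fun s => congrArg Subtype.val (congrFun (LinearMap.mem_ker.1 hc) s)⟩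

section AuxiliaryPolynomial

variable {F J : Type*} [Field F] [Fintype J] {W : F[X]} {Q f g : J → F[X]} {A B M h : ℕ}

theorem exists_sum_twistedDerivative_mul_eq_zero (hW : W.natDegree ≤ h)
    (hQ : ∀ j, (Q j).natDegree ≤ h) (hg : ∀ j, (g j).natDegree ≤ A)
    (hdim : M * (A + B + M * h) < Fintype.card J * B) :
    ∃ c : J → F[X], c ≠ 0 ∧ (∀ j, (c j).natDegree < B) ∧
      ∀ s < M, ∑ j, twistedDerivative W (Q j) s (c j) * g j = 0 := by
  have hB : B ≠ 0 := by
    rintro rfl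
    simp at hdim
  let Ψ (s : Fin M) : (J → degreeLT F B) →ₗ[F] F[X] := ∑ j,
    LinearMap.mulRight F (g j) ∘ₗ twistedDerivative W (Q j) s ∘ₗ
      (degreeLT F B).subtype ∘ₗ LinearMap.proj j
  have hΨ (s : Fin M) (c : J → degreeLT F B) :
      Ψ s c = ∑ j, twistedDerivative W (Q j) s (c j) * g j := by
    simp [Ψ]
  have natDegree_lt (P : degreeLT F B) : (P : F[X]).natDegree < B := by
    obtain h0 | h0 := eq_or_ne (P : F[X]) 0
    · rw [h0, natDegree_zero]
      exact Nat.pos_of_ne_zero hB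
    · exact (natDegree_lt_iff_degree_lt h0).2 (mem_degreeLT.1 P.2)
  have Ψ_mem (s : Fin M) (c : J → degreeLT F B) : Ψ s c ∈ degreeLT F (A + B + M * h) := by
    rw [hΨ]
    refine Submodule.sum_mem _ fun j _ => mem_degreeLT.2 ?_
    refine degree_le_natDegree.trans_lt (Nat.cast_lt.2 ?_)
    calc _ ≤ (c j : F[X]).natDegree + s * h + A :=
          natDegree_mul_le_of_le (natDegree_twistedDerivative_le hW (hQ j) _ s) (hg j)
      _ < B + M * h + A := by
          have hs : s * h ≤ M * h := Nat.mul_le_mul_right h s.isLt.le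
          have := natDegree_lt (c j)
          omega
      _ = A + B + M * h := by ring
  obtain ⟨c, hc0, hc⟩ := exists_ne_zero_forall_map_eq_zero Ψ Ψ_mem hdim
  refine ⟨fun j => c j, fun h0 => hc0 ?_, fun j => natDegree_lt _, fun s hs => ?_⟩
  · exact funext fun j => Subtype.ext (congrFun h0 j)
  · rw [← hc ⟨s, hs⟩, hΨ]

/-- Stepanov's method: on `S` the `f j` agree with the low-degree polynomials `g j`, so linear
algebra yields `c j` for which `∑ c_j f_j` vanishes to order `M` on `S`. -/
theorem card_mul_le_of_linearIndependent_natDegree_lt (hW : W.natDegree ≤ h)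
    (hQ : ∀ j, (Q j).natDegree ≤ h) (hg : ∀ j, (g j).natDegree ≤ A)
    (hdim : M * (A + B + M * h) < Fintype.card J * B)
    (hf : ∀ j, W * derivative (f j) = Q j * f j)
    (hindep : ∀ c : J → F[X], (∀ j, (c j).natDegree < B) → ∑ j, c j * f j = 0 → c = 0)
    {D : ℕ} (hD : ∀ j, (f j).natDegree ≤ D) (hM : ∀ m < M, m ≠ 0 → (m : F) ≠ 0)
    {S : Finset F} (hWS : ∀ a ∈ S, W.eval a ≠ 0)
    (hfg : ∀ a ∈ S, ∀ j, (f j).eval a = (g j).eval a) : #S * M ≤ B + D := by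
  obtain ⟨c, hc0, hcB, hc⟩ := exists_sum_twistedDerivative_mul_eq_zero hW hQ hg hdim
  let G : F[X] := ∑ j, c j * f j
  have hG0 : G ≠ 0 := fun hG => hc0 (hindep c hcB hG)
  have hGdeg : G.natDegree ≤ B + D :=
    natDegree_sum_le_of_forall_le _ _ fun j _ => natDegree_mul_le_of_le (hcB j).le (hD j)
  have hderiv (s : ℕ) : W ^ s * derivative^[s] G =
      ∑ j, twistedDerivative W (Q j) s (c j) * f j := by
    rw [iterate_derivative_sum, mul_sum]
    exact sum_congr rfl fun j _ => pow_mul_iterate_derivative_mul (hf j) _ s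
  refine (card_mul_le_natDegree fun a ha => ?_).trans hGdeg
  refine le_rootMultiplicity_of_iterate_derivative hG0 hM fun s hs => ?_
  have heval : W.eval a ^ s * (derivative^[s] G).eval a = 0 := by
    rw [← eval_pow, ← eval_mul, hderiv, ← eval_zero (x := a), ← hc s hs]
    simp only [eval_finsetSum, eval_mul, hfg a ha]
  exact (mul_eq_zero.1 heval).resolve_left (pow_ne_zero s (hWS a ha))

end AuxiliaryPolynomial

end Stepanov

section PowerResidueRuns

variable {F ι : Type*} [Field F] [Fintype F] [Fintype ι] {l k A B : ℕ} {b : ι → F}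

/-- The polynomials `(X ^ q) ^ i * ∏ (X + b_m) ^ (k * e_m)`, where `q` is the cardinality of `F`.
If every `a + b_m` is a `k`-th root of unity, then the value of such a polynomial at `a` is
`a ^ i`, whatever `e` is. -/
noncomputable def runPolynomial (b : ι → F) (k : ℕ) (j : (ι → Fin l) × Fin A) : F[X] :=
  (X ^ Fintype.card F) ^ (j.2 : ℕ) * kummerMonomial (fun m => (X + C (b m)) ^ k) j.1

theorem eval_runPolynomial {a : F} (ha : ∀ m, (a + b m) ^ k = 1) (j : (ι → Fin l) × Fin A) :
    (runPolynomial b k j).eval a = (X ^ (j.2 : ℕ) : F[X]).eval a := by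
  simp [runPolynomial, kummerMonomial, eval_prod, ha, FiniteField.pow_card]

theorem natDegree_runPolynomial_le (hlk : l * k ≤ Fintype.card F)
    (j : (ι → Fin l) × Fin A) :
    (runPolynomial b k j).natDegree ≤ Fintype.card F * A + Fintype.card ι * Fintype.card F := by
  refine natDegree_mul_le_of_le ?_ ((natDegree_prod_le _ _).trans ?_)
  · rw [← pow_mul, natDegree_X_pow]
    exact Nat.mul_le_mul_left _ j.2.isLt.le
  · refine (sum_le_card_nsmul _ _ (Fintype.card F) fun m _ => ?_).trans_eq (by simp)
    rw [← pow_mul]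
    calc _ ≤ k * (j.1 m : ℕ) := (natDegree_pow_le).trans_eq (by rw [natDegree_X_add_C, mul_one])
      _ ≤ k * l := Nat.mul_le_mul_left _ (j.1 m).isLt.le
      _ ≤ Fintype.card F := by rwa [mul_comm]

theorem exists_prod_mul_derivative_runPolynomial_eq (b : ι → F) (k : ℕ)
    (j : (ι → Fin l) × Fin A) : ∃ Q : F[X], Q.natDegree ≤ Fintype.card ι ∧
      (∏ m, (X + C (b m))) * derivative (runPolynomial b k j) = Q * runPolynomial b k j := by
  obtain ⟨Q, hQ, h⟩ := exists_prod_mul_derivative_prod_pow_eq b (fun m => k * j.1 m) univ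
  refine ⟨Q, hQ, ?_⟩
  have hX : derivative ((X ^ Fintype.card F : F[X]) ^ (j.2 : ℕ)) = 0 := by
    rw [derivative_pow, derivative_X_pow, Nat.cast_card_eq_zero, C_0, zero_mul, mul_zero]
  have hmono : kummerMonomial (fun m => (X + C (b m)) ^ k) j.1 =
      ∏ m, (X + C (b m)) ^ (k * (j.1 m : ℕ)) := by
    simp only [kummerMonomial, ← pow_mul]
  rw [runPolynomial, derivative_mul, hX, hmono, zero_mul, zero_add, mul_left_comm, h,
    mul_left_comm]

theorem eq_zero_of_sum_mul_runPolynomial_eq_zero [DecidableEq ι]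
    (hlk : l * k = Fintype.card F - 1) (hb : Function.Injective b)
    (hB : l ^ Fintype.card ι * (B + Fintype.card ι) ≤ Fintype.card F)
    {c : (ι → Fin l) × Fin A → F[X]} (hc : ∀ j, (c j).natDegree < B)
    (h : ∑ j, c j * runPolynomial b k j = 0) : c = 0 := by
  cases isEmpty_or_nonempty ((ι → Fin l) × Fin A)
  · exact Subsingleton.elim _ _
  have hB0 : 0 < B := pos_of_gt (hc (Classical.arbitrary _))
  let P (e : ι → Fin l) : F[X][X] := ∑ i : Fin A, (c (e, i)).map C * C (X ^ (i : ℕ))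
  have hPdeg (e : ι → Fin l) : (P e).natDegree < B := by
    refine (natDegree_sum_le_of_forall_le (n := B - 1) _ _ fun i _ => ?_).trans_lt
      (Nat.sub_one_lt hB0.ne')
    refine (natDegree_mul_C_le _ _).trans (natDegree_map_le.trans ?_)
    exact Nat.le_sub_one_of_lt (hc (e, i))
  have hPsubst (e : ι → Fin l) : substPow F (Fintype.card F) (P e) =
      ∑ i : Fin A, c (e, i) * (X ^ Fintype.card F) ^ (i : ℕ) := by
    simp only [P, map_sum, map_mul, substPow_map_C, substPow_C, map_pow, expand_X]
  have hP : P = 0 := by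
    refine eq_zero_of_sum_substPow_mul_kummerMonomial_eq_zero hlk hb hB hPdeg ?_
    rw [← h, Fintype.sum_prod_type]
    simp only [hPsubst, sum_mul, runPolynomial, mul_assoc]
  funext ⟨e, i⟩
  ext n
  have hcoeff : ((P e).coeff n).coeff i = (c (e, i)).coeff n := by
    simp only [P, finsetSum_coeff, coeff_mul_C, coeff_map, coeff_C_mul_X_pow, Fin.val_inj]
    simp
  rw [← hcoeff, hP]
  rfl

theorem card_mul_le_of_forall_add_pow_eq_one {M : ℕ}
    (hlk : l * k = Fintype.card F - 1) (hb : Function.Injective b)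
    (hB : l ^ Fintype.card ι * (B + Fintype.card ι) ≤ Fintype.card F)
    (hdim : M * (A + B + M * Fintype.card ι) < l ^ Fintype.card ι * A * B)
    (hM : ∀ m < M, m ≠ 0 → (m : F) ≠ 0) {S : Finset F}
    (hS : ∀ a ∈ S, ∀ m, (a + b m) ^ k = 1) :
    #S * M ≤ B + (Fintype.card F * A + Fintype.card ι * Fintype.card F) := by
  classical
  have hk : k ≠ 0 := by
    rintro rfl
    have := Fintype.one_lt_card (α := F)
    omega
  choose Q hQ hf using exists_prod_mul_derivative_runPolynomial_eq (l := l) (A := A) b k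
  refine card_mul_le_of_linearIndependent_natDegree_lt (A := A) (W := ∏ m, (X + C (b m)))
    (g := fun j => X ^ (j.2 : ℕ)) (f := runPolynomial b k) ?_ hQ (fun j => ?_) ?_ hf
    (fun c => eq_zero_of_sum_mul_runPolynomial_eq_zero hlk hb hB)
    (natDegree_runPolynomial_le (by omega)) hM (fun a ha => ?_)
    fun a ha => eval_runPolynomial (hS a ha)
  · exact (natDegree_prod_le _ _).trans (by simp)
  · exact (natDegree_X_pow_le _).trans j.2.isLt.le
  · simpa using hdim
  · rw [eval_prod]
    refine prod_ne_zero_iff.2 fun m _ h0 => ?_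
    rw [eval_add, eval_X, eval_C] at h0
    have := hS a ha m
    rw [h0, zero_pow hk] at this
    exact zero_ne_one this

end PowerResidueRuns

section RunsInPrimeField

/-- The parameters of `card_mul_le_of_forall_add_pow_eq_one` with `A = h` and `D = l ^ h`. -/
theorem exists_runPolynomial_parameters {p D h : ℕ} (hD : 0 < D) (h2 : 2 ≤ h)
    (hlow : √(p : ℝ) ≤ D) (hup : 10 * (h + 1) * D ≤ p) : ∃ B M : ℕ, D * (B + h) ≤ p ∧
      M * (h + B + M * h) < D * h * B ∧ 0 < M ∧ M < p ∧
      (B + 2 * h * p : ℝ) ≤ 5 * h * √(p : ℝ) * M := by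
  set s := √(p : ℝ)
  have hs : s * s = p := Real.mul_self_sqrt p.cast_nonneg
  have hh : (2 : ℝ) ≤ h := Nat.ofNat_le_cast.2 h2
  have hZ : 10 * (h + 1) ≤ p / D := (Nat.le_div_iff_mul_le hD).2 hup
  obtain ⟨B, hB⟩ : ∃ B, p / D = B + h := ⟨p / D - h, by omega⟩
  have hDB : D * (B + h) ≤ p := hB ▸ Nat.mul_div_le p D
  have hBD : 9 * p ≤ 10 * (D * B) := by
    have := hB ▸ Nat.lt_mul_div_succ p hD
    linarith
  have hs0 : 0 < s := Real.sqrt_pos.2 <| Nat.cast_pos.2 <| by nlinarith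
  have hBs : (B + h : ℝ) ≤ s := by
    have : (D * (B + h) : ℝ) ≤ p := mod_cast hDB
    refine le_of_mul_le_mul_left ?_ hs0
    nlinarith
  have hhs : 10 * (h + 1) ≤ s := hBs.trans' (mod_cast hB ▸ hZ)
  have hhss : 2 * (s * s) ≤ h * (s * s) := by gcongr
  have hM : (⌊s / 2⌋₊ : ℝ) ≤ s / 2 := Nat.floor_le (by positivity)
  have hM' : 7 / 15 * s ≤ (⌊s / 2⌋₊ : ℝ) := by linarith [Nat.sub_one_lt_floor (s / 2)]
  refine ⟨B, ⌊s / 2⌋₊, hDB, ?_, ?_, ?_, ?_⟩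
  · rify
    calc (⌊s / 2⌋₊ * (h + B + ⌊s / 2⌋₊ * h) : ℝ) ≤ s / 2 * (s + s / 2 * h) := by
          gcongr
          linarith
      _ < 0.9 * p * h := by nlinarith
      _ ≤ D * B * h := by
          rify at hBD
          exact mul_le_mul_of_nonneg_right (by linarith) h.cast_nonneg
      _ = D * h * B := by ring
  · exact Nat.floor_pos.2 (by linarith)
  · rify
    nlinarith
  · calc (B + 2 * h * p : ℝ) ≤ s / 30 * s + 2 * h * (s * s) := by
          have : (B : ℝ) ≤ s / 30 * s := by nlinarith
          rw [hs]
          linarith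
      _ ≤ 5 * h * s * (7 / 15 * s) := by nlinarith
      _ ≤ _ := by gcongr

theorem card_le_of_forall_add_natCast_pow_eq_one {p l k h : ℕ} [Fact p.Prime]
    (hlk : l * k = p - 1) (h2 : 2 ≤ h) (hlow : √(p : ℝ) ≤ (l : ℝ) ^ h)
    (hup : 10 * (h + 1) * l ^ h ≤ p) {S : Finset (ZMod p)}
    (hS : ∀ a ∈ S, ∀ m < h, (a + m) ^ k = 1) : (#S : ℝ) ≤ 5 * h * √(p : ℝ) := by
  have hp1 : 1 < p := (Fact.out : p.Prime).one_lt
  have hl : 0 < l := Nat.pos_of_ne_zero <| by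
    rintro rfl
    omega
  obtain ⟨B, M, hDB, hdim, hM0, hMp, hBM⟩ :=
    exists_runPolynomial_parameters (pow_pos hl h) h2 (by rwa [Nat.cast_pow]) hup
  have hhp (m : Fin h) : (m : ℕ) < p := by
    have := Nat.le_mul_of_pos_right (10 * (h + 1)) (pow_pos hl h)
    omega
  have hinj : Function.Injective fun m : Fin h => ((m : ℕ) : ZMod p) := fun m n hmn =>
    Fin.ext <| CharP.natCast_injOn_Iio (ZMod p) p (hhp m) (hhp n) hmn
  have hcard := card_mul_le_of_forall_add_pow_eq_one (F := ZMod p) (A := h) (B := B) (M := M)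
    (S := S) (by rwa [ZMod.card]) hinj (by rwa [ZMod.card, Fintype.card_fin])
    (by rwa [Fintype.card_fin]) (fun m hm hm0 h0 => ?_) fun a ha m => hS a ha m m.isLt
  · rw [ZMod.card, Fintype.card_fin] at hcard
    refine le_of_mul_le_mul_right (hBM.trans' ?_) (Nat.cast_pos.2 hM0)
    rify at hcard
    linarith
  · rw [ZMod.natCast_eq_zero_iff] at h0
    exact absurd (Nat.le_of_dvd (Nat.pos_of_ne_zero hm0) h0) (by omega)

end RunsInPrimeField

section Characters

theorem exists_prime_mul_eq_card_sub_one_forall_pow_eq_one {F R : Type*} [Field F] [Fintype F]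
    [CommMonoidWithZero R] {χ : MulChar F R} (hχ : χ ≠ 1) :
    ∃ l k : ℕ, l.Prime ∧ l * k = Fintype.card F - 1 ∧ ∀ x, χ x = 1 → x ^ k = 1 := by
  classical
  have : Nontrivial R := not_subsingleton_iff_nontrivial.1 fun _ =>
    hχ (MulChar.ext fun _ => Subsingleton.elim _ _)
  let H := χ.toUnitHom.ker
  have hH : H.index ≠ 1 := by
    rw [Ne, Subgroup.index_eq_one]
    refine fun htop => hχ (MulChar.eq_one_iff.2 fun a => ?_)
    have ha : a ∈ H := htop ▸ Subgroup.mem_top a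
    rw [← MulChar.coe_toUnitHom, MonoidHom.mem_ker.1 ha, Units.val_one]
  obtain ⟨l, hl, m, hm⟩ := Nat.exists_prime_and_dvd hH
  refine ⟨l, m * Nat.card H, hl, ?_, fun x hx => ?_⟩
  · rw [← mul_assoc, ← hm, mul_comm, H.card_mul_index, Nat.card_eq_fintype_card,
      Fintype.card_units]
  · have hx0 : IsUnit x := by
      by_contra hx0
      rw [χ.map_nonunit hx0] at hx
      exact zero_ne_one hx
    obtain ⟨a, rfl⟩ := hx0
    have ha : a ∈ H := Units.ext (by rw [MulChar.coe_toUnitHom, hx, Units.val_one])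
    have hpow : a ^ Nat.card H = 1 :=
      congrArg Subtype.val (pow_card_eq_one' (x := (⟨a, ha⟩ : H)))
    rw [← Units.val_pow_eq_pow_val, mul_comm, pow_mul, hpow, one_pow, Units.val_one]

theorem card_le_of_forall_pow_eq_one {F : Type*} [CommRing F] [IsDomain F] {k : ℕ} (hk : 0 < k)
    {S : Finset F} (hS : ∀ a ∈ S, a ^ k = 1) : #S ≤ k := by
  classical
  have hsub : S ⊆ (nthRoots k (1 : F)).toFinset := fun a ha => by
    rw [Multiset.mem_toFinset, mem_nthRoots hk]
    exact hS a ha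
  exact (card_le_card hsub).trans ((Multiset.toFinset_card_le _).trans (card_nthRoots k 1))

open Classical in
/-- The starting points `a` of the runs `a, a + 1, …, a + h - 1` on which `χ` is constantly `1`. -/
noncomputable def runStarts {F R : Type*} [CommRing F] [Fintype F] [CommMonoidWithZero R]
    (χ : MulChar F R) (h : ℕ) : Finset F :=
  {a | ∀ m < h, χ (a + m) = 1}

theorem mem_runStarts {F R : Type*} [CommRing F] [Fintype F] [CommMonoidWithZero R]
    {χ : MulChar F R} {h : ℕ} {a : F} : a ∈ runStarts χ h ↔ ∀ m < h, χ (a + m) = 1 := by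
  simp [runStarts]

end Characters

section AdmissiblePairs

theorem card_filter_dvd_add_le (R c : ℕ) {u : ℕ} (hu : 0 < u) :
    #{r ∈ Ioc 0 R | u ∣ r + c} ≤ R / u + 1 := by
  have hsub : ({r ∈ Ioc 0 R | u ∣ r + c}).map (addRightEmbedding c) ⊆
      {x ∈ Ioc 0 (R + c) | u ∣ x} \ {x ∈ Ioc 0 c | u ∣ x} := by
    intro x hx
    simp only [mem_map, mem_filter, mem_Ioc, addRightEmbedding_apply, mem_sdiff] at hx ⊢
    obtain ⟨r, ⟨hr, hdvd⟩, rfl⟩ := hx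
    exact ⟨⟨by omega, hdvd⟩, by omega⟩
  have hle : {x ∈ Ioc 0 c | u ∣ x} ⊆ {x ∈ Ioc 0 (R + c) | u ∣ x} :=
    filter_subset_filter _ (Ioc_subset_Ioc_right (Nat.le_add_left c R))
  have hcard := card_le_card hsub
  rw [card_map, card_sdiff_of_subset hle, Nat.Ioc_filter_dvd_card_eq_div,
    Nat.Ioc_filter_dvd_card_eq_div, Nat.add_div hu] at hcard
  refine hcard.trans (Nat.sub_le_iff_le_add.2 ?_)
  split_ifs <;> linarith

theorem sum_one_div_two_mul_add_one_sq_le (n : ℕ) :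
    ∑ j ∈ Ioc 0 n, (1 : ℝ) / (2 * j + 1 : ℕ) ^ 2 ≤ 1 / 4 - 1 / (4 * (n + 1)) := by
  induction n with
  | zero => simp
  | succ n ih =>
    have hstep : (1 : ℝ) / (2 * (n + 1) + 1 : ℕ) ^ 2 ≤
        1 / (4 * (n + 1)) - 1 / (4 * ((n + 1 : ℕ) + 1)) := by
      push_cast
      rw [div_sub_div _ _ (by positivity) (by positivity),
        div_le_div_iff₀ (by positivity) (by positivity)]
      nlinarith
    rw [← insert_Ioc_right_eq_Ioc_add_one (Nat.zero_le n), sum_insert (by simp)]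
    linarith

theorem card_filter_dvd_and_dvd_le (R Q d : ℕ) :
    (#{x ∈ Ioc 0 R ×ˢ Ioc 0 Q | d ∣ x.1 ∧ d ∣ x.2} : ℝ) ≤ R * Q * (1 / d ^ 2) := by
  rw [filter_product (d ∣ ·) (d ∣ ·), card_product, Nat.Ioc_filter_dvd_card_eq_div,
    Nat.Ioc_filter_dvd_card_eq_div, Nat.cast_mul]
  calc ((R / d : ℕ) * (Q / d : ℕ) : ℝ) ≤ R / d * (Q / d) := by
        gcongr <;> exact Nat.cast_div_le
    _ = R * Q * (1 / d ^ 2) := by ring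

-- A common factor is `2` or some `2 * j + 1 ≥ 3`, and `∑ 1 / (2 * j + 1) ^ 2 ≤ 1 / 4`.
theorem card_filter_not_coprime_le (R Q : ℕ) :
    (#{x ∈ Ioc 0 R ×ˢ Ioc 0 Q | ¬ x.1.Coprime x.2} : ℝ) ≤ R * Q / 2 := by
  let D (d : ℕ) : Finset (ℕ × ℕ) := {x ∈ Ioc 0 R ×ˢ Ioc 0 Q | d ∣ x.1 ∧ d ∣ x.2}
  have hsub : {x ∈ Ioc 0 R ×ˢ Ioc 0 Q | ¬ x.1.Coprime x.2} ⊆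
      D 2 ∪ (Ioc 0 R).biUnion fun j => D (2 * j + 1) := by
    intro x hx
    obtain ⟨hxRQ, hcop⟩ := mem_filter.1 hx
    obtain ⟨d, hd, hd1, hd2⟩ := Nat.Prime.not_coprime_iff_dvd.1 hcop
    have hxd : x ∈ D d := mem_filter.2 ⟨hxRQ, hd1, hd2⟩
    obtain rfl | ⟨j, rfl⟩ := hd.eq_two_or_odd'
    · exact mem_union_left _ hxd
    · obtain ⟨h0, hR⟩ := mem_Ioc.1 (mem_product.1 hxRQ).1
      have hle := Nat.le_of_dvd h0 hd1
      have htwo := hd.two_le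
      exact mem_union_right _ <| mem_biUnion.2 ⟨j, mem_Ioc.2 ⟨by omega, by omega⟩, hxd⟩
  have hodd : (#((Ioc 0 R).biUnion fun j => D (2 * j + 1)) : ℝ) ≤ R * Q * (1 / 4) := by
    calc _ ≤ ∑ j ∈ Ioc 0 R, (#(D (2 * j + 1)) : ℝ) := mod_cast card_biUnion_le
      _ ≤ ∑ j ∈ Ioc 0 R, R * Q * (1 / (2 * j + 1 : ℕ) ^ 2 : ℝ) :=
          sum_le_sum fun j _ => card_filter_dvd_and_dvd_le R Q _
      _ ≤ R * Q * (1 / 4) := by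
          rw [← mul_sum]
          gcongr
          exact (sum_one_div_two_mul_add_one_sq_le R).trans (sub_le_self _ (by positivity))
  have heven : (#(D 2) : ℝ) ≤ R * Q * (1 / 4) :=
    (card_filter_dvd_and_dvd_le R Q 2).trans_eq (by norm_num)
  calc _ ≤ (#(D 2) + #((Ioc 0 R).biUnion fun j => D (2 * j + 1)) : ℝ) :=
        mod_cast (card_le_card hsub).trans (card_union_le _ _)
    _ ≤ R * Q / 2 := by linarith

theorem card_filter_dvd_snd_le (R Q u : ℕ) :
    (#{x ∈ Ioc 0 R ×ˢ Ioc 0 Q | u ∣ x.2} : ℝ) ≤ R * Q / u := by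
  rw [filter_product_right (u ∣ ·), card_product, Nat.Ioc_filter_dvd_card_eq_div, Nat.card_Ioc,
    Nat.sub_zero, Nat.cast_mul, mul_div_assoc]
  gcongr
  exact Nat.cast_div_le

theorem card_filter_exists_dvd_add_mul_le (R Q h : ℕ) {u : ℕ} (hu : 0 < u) :
    (#{x ∈ Ioc 0 R ×ˢ Ioc 0 Q | ∃ m < h, u ∣ x.1 + m * x.2} : ℝ) ≤ Q * h * (R / u + 1) := by
  have hsub : {x ∈ Ioc 0 R ×ˢ Ioc 0 Q | ∃ m < h, u ∣ x.1 + m * x.2} ⊆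
      (Ioc 0 Q ×ˢ range h).biUnion fun y => {r ∈ Ioc 0 R | u ∣ r + y.2 * y.1} ×ˢ {y.1} := by
    intro x hx
    obtain ⟨hx, m, hm, hdvd⟩ := mem_filter.1 hx
    obtain ⟨hr, hq⟩ := mem_product.1 hx
    refine mem_biUnion.2 ⟨(x.2, m), mem_product.2 ⟨hq, mem_range.2 hm⟩, ?_⟩
    exact mem_product.2 ⟨mem_filter.2 ⟨hr, hdvd⟩, mem_singleton_self _⟩
  calc _ ≤ ((Q * h * (R / u + 1) : ℕ) : ℝ) := by
        refine Nat.cast_le.2 <| (card_le_card hsub).trans <|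
          (card_biUnion_le_card_mul _ _ (R / u + 1) fun y _ => ?_).trans_eq ?_
        · rw [card_product, card_singleton, mul_one]
          exact card_filter_dvd_add_le R _ hu
        · rw [card_product, Nat.card_Ioc, card_range, Nat.sub_zero]
    _ ≤ Q * h * (R / u + 1) := by
        push_cast
        gcongr
        exact Nat.cast_div_le

/-- The reduced fractions `r / q` with `r ≤ R` and `q ≤ Q` such that `u` divides neither `q` nor
any of the numerators of `r / q, r / q + 1, …, r / q + (h - 1)`. -/
def admissiblePairs (R Q h u : ℕ) : Finset (ℕ × ℕ) :=
  {x ∈ Ioc 0 R ×ˢ Ioc 0 Q | x.1.Coprime x.2 ∧ ¬ u ∣ x.2 ∧ ∀ m < h, ¬ u ∣ x.1 + m * x.2}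

theorem le_card_admissiblePairs (R Q h : ℕ) {u : ℕ} (hu : 0 < u) :
    (R * Q / 2 - R * Q / u - Q * h * (R / u + 1) : ℝ) ≤ #(admissiblePairs R Q h u) := by
  have hcover : Ioc 0 R ×ˢ Ioc 0 Q ⊆ admissiblePairs R Q h u ∪
      ({x ∈ Ioc 0 R ×ˢ Ioc 0 Q | ¬ x.1.Coprime x.2} ∪
        ({x ∈ Ioc 0 R ×ˢ Ioc 0 Q | u ∣ x.2} ∪
          {x ∈ Ioc 0 R ×ˢ Ioc 0 Q | ∃ m < h, u ∣ x.1 + m * x.2})) := by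
    intro x hx
    simp only [admissiblePairs, mem_union, mem_filter, hx, true_and]
    by_contra! ⟨hadm, hcop, hdvd, hshift⟩
    obtain ⟨m, hm, hdvd'⟩ := hadm hcop hdvd
    exact hshift m hm hdvd'
  have hcard : R * Q = #(Ioc 0 R ×ˢ Ioc 0 Q) := by simp
  have hle := card_le_card hcover
  grw [card_union_le, card_union_le, card_union_le, ← hcard] at hle
  have hle' := Nat.cast_le (α := ℝ).2 hle
  push_cast at hle'
  linarith [card_filter_not_coprime_le R Q, card_filter_dvd_snd_le R Q u,
    card_filter_exists_dvd_add_mul_le R Q h hu]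

end AdmissiblePairs

section RunStarts

variable {p R Q : ℕ} [Fact p.Prime]

theorem natCast_ne_zero_of_mem_product (hRQ : R * Q < p) {x : ℕ × ℕ}
    (hx : x ∈ Ioc 0 R ×ˢ Ioc 0 Q) : (x.2 : ZMod p) ≠ 0 := by
  simp only [mem_product, mem_Ioc] at hx
  obtain ⟨⟨hr0, hr⟩, hq0, hq⟩ := hx
  rw [Ne, ZMod.natCast_eq_zero_iff]
  exact Nat.not_dvd_of_pos_of_lt hq0 (by nlinarith)

theorem injOn_natCast_div_natCast (hRQ : R * Q < p) :
    Set.InjOn (fun x : ℕ × ℕ => (x.1 / x.2 : ZMod p))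
      {x | x ∈ Ioc 0 R ×ˢ Ioc 0 Q ∧ x.1.Coprime x.2} := by
  rintro ⟨r, q⟩ ⟨hx, hcop⟩ ⟨r', q'⟩ ⟨hx', hcop'⟩ heq
  have heq' : (r * q' : ZMod p) = r' * q := (div_eq_div_iff
    (natCast_ne_zero_of_mem_product hRQ hx) (natCast_ne_zero_of_mem_product hRQ hx')).1 heq
  simp only [mem_product, mem_Ioc] at hx hx'
  have hmul : r * q' = r' * q := by
    refine CharP.natCast_injOn_Iio (ZMod p) p ?_ ?_ (by push_cast; exact heq')
    · exact (Nat.mul_le_mul hx.1.2 hx'.2.2).trans_lt hRQ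
    · exact (Nat.mul_le_mul hx'.1.2 hx.2.2).trans_lt hRQ
  obtain rfl : r = r' := Nat.dvd_antisymm (hcop.dvd_of_dvd_mul_right ⟨q', hmul.symm⟩)
    (hcop'.dvd_of_dvd_mul_right ⟨q, hmul⟩)
  rw [Nat.eq_of_mul_eq_mul_left hx.1.1 hmul]

theorem card_admissiblePairs_le_card_runStarts {M : Type*} [CommMonoidWithZero M]
    {χ : MulChar (ZMod p) M} {h u : ℕ} (hRQ : R * Q < p) (hh : 0 < h)
    (hχ : ∀ n : ℕ, 0 < n → n < R + h * Q → ¬ u ∣ n → χ n = 1) :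
    #(admissiblePairs R Q h u) ≤ #(runStarts χ h) := by
  refine card_le_card_of_injOn (fun x => (x.1 / x.2 : ZMod p)) (fun x hx => ?_)
    ((injOn_natCast_div_natCast hRQ).mono fun x hx => ?_)
  · obtain ⟨hxRQ, -, hdvd, hshift⟩ := mem_filter.1 hx
    have hq0 := natCast_ne_zero_of_mem_product hRQ hxRQ
    simp only [mem_product, mem_Ioc] at hxRQ
    refine mem_runStarts.2 fun m hm => ?_
    have hq : χ x.2 = 1 := hχ _ (by omega) (by nlinarith) hdvd
    have hr : χ (x.1 + m * x.2 : ℕ) = 1 := hχ _ (by omega) (by nlinarith) (hshift m hm)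
    calc χ (x.1 / x.2 + m) = χ (x.1 / x.2 + m) * χ x.2 := by rw [hq, mul_one]
      _ = χ (x.1 + m * x.2 : ℕ) := by
          rw [← map_mul, add_mul, div_mul_cancel₀ _ hq0, Nat.cast_add, Nat.cast_mul]
      _ = 1 := hr
  · obtain ⟨hxRQ, hcop, -⟩ := mem_filter.1 hx
    exact ⟨hxRQ, hcop⟩

theorem le_card_runStarts_mul {M : Type*} [CommMonoidWithZero M] {χ : MulChar (ZMod p) M}
    {h u : ℕ} {X : ℝ} (hh : 0 < h) (hhu : 9 * (h + 1) ≤ (u : ℝ)) (hhX : 1000 * h ≤ X)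
    (hXp : X ^ 2 < 4 * p) (hχ : ∀ n : ℕ, 0 < n → n < X → ¬ u ∣ n → χ n = 1) :
    0.09 * X ^ 2 ≤ #(runStarts χ h) * h := by
  have hh1 : (1 : ℝ) ≤ h := Nat.one_le_cast.2 hh
  have hu : (0 : ℝ) < u := by linarith
  let R := ⌊X / 2⌋₊
  let Q := ⌊X / (2 * h)⌋₊
  have hX : 0 ≤ X := by linarith
  have hR : (R : ℝ) ≤ X / 2 := Nat.floor_le (by linarith)
  have hR' : X / 2 - 1 ≤ R := (Nat.sub_one_lt_floor _).le
  have hQ : (Q * h : ℝ) ≤ X / 2 := by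
    calc (Q * h : ℝ) ≤ X / (2 * h) * h := by
          gcongr
          exact Nat.floor_le (by positivity)
      _ = X / 2 := by field_simp
  have hQ' : X / 2 - h ≤ Q * h := by
    calc X / 2 - h = (X / (2 * h) - 1) * h := by field_simp
      _ ≤ Q * h := by
          gcongr
          exact (Nat.sub_one_lt_floor _).le
  have hRQ : R * Q < p := by
    rify
    calc (R * Q : ℝ) ≤ R * (Q * h) := by
          gcongr
          exact le_mul_of_one_le_right Q.cast_nonneg hh1
      _ ≤ X / 2 * (X / 2) := by gcongr
      _ < p := by linarith
  have hcard : (R * Q / 2 - R * Q / u - Q * h * (R / u + 1) : ℝ) ≤ #(runStarts χ h) :=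
    (le_card_admissiblePairs R Q h (Nat.cast_pos.1 hu)).trans <| Nat.cast_le.2 <|
      card_admissiblePairs_le_card_runStarts hRQ hh fun n hn0 hn =>
        hχ n hn0 (by rify at hn; linarith)
  have hratio : (h + 1) / u ≤ (1 / 9 : ℝ) := by
    rw [div_le_iff₀ hu]
    linarith
  calc 0.09 * X ^ 2 ≤ (X / 2 - 1) * (X / 2 - h) * (1 / 2 - 1 / 9) - X / 2 * h := by nlinarith
    _ ≤ R * (Q * h) * (1 / 2 - (h + 1) / u) - Q * h * h := by
        gcongr
        linarith
    _ = (R * Q / 2 - R * Q / u - Q * h * (R / u + 1)) * h := by ring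
    _ ≤ #(runStarts χ h) * h := by gcongr

end RunStarts

section Numerics

theorem rpow_one_div_four_sq {x : ℝ} (hx : 0 ≤ x) : (x ^ ((1 : ℝ) / 4)) ^ 2 = √x := by
  rw [← Real.rpow_mul_natCast hx, Real.sqrt_eq_rpow]
  norm_num

theorem ten_pow_five_le_rpow_one_div_four {x : ℝ} (hx : 10 ^ 20 ≤ x) :
    10 ^ 5 ≤ x ^ ((1 : ℝ) / 4) := by
  rw [one_div, Real.le_rpow_inv_iff_of_pos (by positivity) (by linarith) (by norm_num)]
  norm_num at hx ⊢
  exact hx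

theorem ten_mul_log_sq_lt_sqrt {x : ℝ} (hx : 10 ^ 20 ≤ x) : 10 * Real.log x ^ 2 < √x := by
  have hx0 : 0 ≤ x := by linarith
  have hpow : 10 ^ 5 ≤ x ^ ((1 : ℝ) / 4) := ten_pow_five_le_rpow_one_div_four hx
  have hlog0 : 0 ≤ Real.log x := Real.log_nonneg (by linarith)
  have hlog : Real.log x ≤ 8 * x ^ ((1 : ℝ) / 8) := by
    linarith [Real.log_le_rpow_div hx0 (by norm_num : (0 : ℝ) < 1 / 8)]
  calc 10 * Real.log x ^ 2 ≤ 10 * (8 * x ^ ((1 : ℝ) / 8)) ^ 2 := by gcongr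
    _ = 640 * x ^ ((1 : ℝ) / 4) := by
        rw [mul_pow, ← Real.rpow_mul_natCast hx0]
        norm_num
        ring
    _ < (x ^ ((1 : ℝ) / 4)) ^ 2 := by nlinarith
    _ = √x := rpow_one_div_four_sq hx0

theorem forty_five_le_log {x : ℝ} (hx : 10 ^ 20 ≤ x) : 45 ≤ Real.log x := by
  calc (45 : ℝ) ≤ 66 * Real.log 2 := by linarith [Real.log_two_gt_d9]
    _ = Real.log (2 ^ 66) := by rw [Real.log_pow, Nat.cast_ofNat]
    _ ≤ Real.log x := Real.log_le_log (by positivity) (by linarith)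

theorem seven_le_exp_two : 7 ≤ Real.exp 2 := by
  rw [← one_add_one_eq_two, Real.exp_add]
  nlinarith [Real.exp_one_gt_d9]

theorem exists_runLength {l : ℕ} {x : ℝ} (hl : 2 ≤ l) (hx : 10 ^ 20 ≤ x)
    (hlx : 8 * Real.log x * l ≤ √x) : ∃ h : ℕ, 2 ≤ h ∧ h ≤ 0.75 * Real.log x ∧
      √x ≤ (l : ℝ) ^ h ∧ 10 * (h + 1) * (l : ℝ) ^ h ≤ x := by
  have hl2 : (2 : ℝ) ≤ l := Nat.ofNat_le_cast.2 hl
  have hx0 : 0 ≤ x := by linarith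
  have hL : 45 ≤ Real.log x := forty_five_le_log hx
  have hlt : (l : ℝ) < √x := by nlinarith
  obtain ⟨n, hn, hn'⟩ := exists_nat_pow_near (by linarith : 1 ≤ √x) (by linarith : 1 < (l : ℝ))
  have hn0 : n ≠ 0 := by
    rintro rfl
    rw [zero_add, pow_one] at hn'
    exact hn'.not_gt hlt
  have hnL : (n + 1 : ℝ) ≤ 0.75 * Real.log x := by
    have hlog : n * Real.log 2 ≤ Real.log x / 2 := by
      rw [← Real.log_pow, ← Real.log_sqrt hx0]
      exact Real.log_le_log (by positivity) ((pow_le_pow_left₀ zero_le_two hl2 n).trans hn)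
    nlinarith [Real.log_two_gt_d9]
  refine ⟨n + 1, by omega, mod_cast hnL, hn'.le, ?_⟩
  calc (10 * ((n + 1 : ℕ) + 1) * l ^ (n + 1) : ℝ) = 10 * (n + 2) * (l * l ^ n) := by
        push_cast
        ring
    _ ≤ 8 * Real.log x * (l * √x) := by
        have hcoeff : 10 * (n + 2 : ℝ) ≤ 8 * Real.log x := by linarith
        gcongr
    _ ≤ √x * √x := by
        rw [← mul_assoc]
        gcongr
    _ = x := Real.mul_self_sqrt hx0

theorem exists_card_runStarts_mul_le {p : ℕ} [Fact p.Prime] (hp : 10 ^ 20 ≤ (p : ℝ)) {R : Type*}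
    [CommMonoidWithZero R] {χ : MulChar (ZMod p) R} (hχ : χ ≠ 1) :
    ∃ h : ℕ, 0 < h ∧ h ≤ 0.75 * Real.log p ∧
      #(runStarts χ h) * h ≤ 3 * √(p : ℝ) * Real.log p ^ 2 := by
  have hL : 45 ≤ Real.log p := forty_five_le_log hp
  have hs : √(p : ℝ) * √(p : ℝ) = p := Real.mul_self_sqrt p.cast_nonneg
  obtain ⟨l, k, hl, hlk, hpow⟩ := exists_prime_mul_eq_card_sub_one_forall_pow_eq_one hχ
  rw [ZMod.card] at hlk
  obtain hlp | hlp := le_or_gt (8 * Real.log p * l) √(p : ℝ)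
  · obtain ⟨h, h2, hhL, hlow, hup⟩ := exists_runLength hl.two_le hp hlp
    refine ⟨h, by omega, hhL, ?_⟩
    have hcard : (#(runStarts χ h) : ℝ) ≤ 5 * h * √(p : ℝ) :=
      card_le_of_forall_add_natCast_pow_eq_one hlk h2 hlow (mod_cast hup) fun a ha m hm =>
        hpow _ (mem_runStarts.1 ha m hm)
    calc (#(runStarts χ h) * h : ℝ) ≤ 5 * h * √(p : ℝ) * h := by gcongr
      _ = 5 * √(p : ℝ) * (h : ℝ) ^ 2 := by ring
      _ ≤ 5 * √(p : ℝ) * (0.75 * Real.log p) ^ 2 := by gcongr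
      _ ≤ 3 * √(p : ℝ) * Real.log p ^ 2 := by
          nlinarith [mul_nonneg (Real.sqrt_nonneg p) (sq_nonneg (Real.log p))]
  · refine ⟨1, one_pos, by push_cast; linarith, ?_⟩
    have hk : 0 < k := Nat.pos_of_ne_zero fun hk => by
      have := (Fact.out : p.Prime).two_le
      simp only [hk, mul_zero] at hlk
      omega
    have hcard : #(runStarts χ 1) ≤ k := by
      refine card_le_of_forall_pow_eq_one hk fun a ha => hpow _ ?_
      simpa using mem_runStarts.1 ha 0 one_pos
    have hlkp : (l * k : ℝ) ≤ p := mod_cast hlk.trans_le (Nat.sub_le p 1)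
    have hk' : (k : ℝ) ≤ 8 * Real.log p * √(p : ℝ) := by
      refine le_of_mul_le_mul_left ?_ (Nat.cast_pos.2 hl.pos : (0 : ℝ) < l)
      nlinarith [Real.sqrt_nonneg p]
    calc (#(runStarts χ 1) * (1 : ℕ) : ℝ) ≤ k := by rw [Nat.cast_one, mul_one]; exact mod_cast hcard
      _ ≤ 8 * Real.log p * √(p : ℝ) := hk'
      _ ≤ 3 * √(p : ℝ) * Real.log p ^ 2 := by
          nlinarith [mul_nonneg (Real.sqrt_nonneg p) (by linarith : 0 ≤ Real.log p)]

end Numerics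

theorem second_smallest_nonresidue_10_20_general {p : ℕ} [Fact p.Prime]
    (hp : (10 : ℝ) ^ 20 ≤ p) {R : Type*} [CommMonoidWithZero R] {χ : MulChar (ZMod p) R}
    (hχ : χ ≠ 1) {u : ℕ} (hu : 7 * Real.log p ≤ u) :
    ∃ n : ℕ, 0 < n ∧ ¬ u ∣ n ∧ χ n ≠ 1 ∧
      n < 6.1374 * (p : ℝ) ^ ((1 : ℝ) / 4) * Real.log p := by
  by_contra! hcon
  have hL : 45 ≤ Real.log p := forty_five_le_log hp
  have hsqrt : 10 * Real.log p ^ 2 < √(p : ℝ) := ten_mul_log_sq_lt_sqrt hp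
  have hX : (6.1374 * (p : ℝ) ^ ((1 : ℝ) / 4) * Real.log p) ^ 2 =
      37.66767876 * √(p : ℝ) * Real.log p ^ 2 := by
    rw [mul_pow, mul_pow, rpow_one_div_four_sq p.cast_nonneg]
    norm_num
  obtain ⟨h, hh, hhL, hle⟩ := exists_card_runStarts_mul_le hp hχ
  have hhu : 9 * (h + 1) ≤ (u : ℝ) := by linarith
  have hhX : 1000 * h ≤ 6.1374 * (p : ℝ) ^ ((1 : ℝ) / 4) * Real.log p := by
    nlinarith [ten_pow_five_le_rpow_one_div_four hp]
  have hXp : (6.1374 * (p : ℝ) ^ ((1 : ℝ) / 4) * Real.log p) ^ 2 < 4 * p := by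
    nlinarith [Real.mul_self_sqrt (p.cast_nonneg (α := ℝ))]
  have hge := le_card_runStarts_mul hh hhu hhX hXp fun n hn0 hnX hun => by
    contrapose! hnX
    exact hcon n hn0 hun hnX
  have hpos : 0 < √(p : ℝ) * Real.log p ^ 2 := mul_pos (by nlinarith) (by nlinarith)
  linarith

end

theorem second_smallest_nonresidue_10_20 (p : ℕ) [Fact p.Prime] (hp : (10:ℕ)^20 ≤ p)
    (χ : DirichletCharacter ℂ p) (hχ : χ ≠ 1)
    (u : ℕ) (hu : u.Prime) (hu2 : Real.exp 2 * Real.log p ≤ u) :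
    ∃ n : ℕ, 0 < n ∧ Nat.gcd n u = 1 ∧ χ (n : ZMod p) ≠ 1 ∧
      (n : ℝ) < 6.1374 * (p : ℝ) ^ ((1:ℝ)/4) * Real.log p := by
  obtain ⟨n, hn0, hun, hχn, hn⟩ := second_smallest_nonresidue_10_20_general (mod_cast hp) hχ <|
    (mul_le_mul_of_nonneg_right seven_le_exp_two (Real.log_natCast_nonneg p)).trans hu2
  exact ⟨n, hn0, (hu.coprime_iff_not_dvd.2 hun).symm, hχn, hn⟩
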